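/- Decompose a nonempty real central arrangement 𝒜 into nonempty indecomposable arrangements as 𝒜 = 𝒜₁ ⊎ ⋯ ⊎ 𝒜_a ⊎ ℬ₁ ⊎ ⋯ ⊎ ℬ_b with |𝒜_p| = 1 for 1 ≤ p ≤ a and |ℬ_q| ≥ 3 for 1 ≤ q ≤ b. Then for each positive integer m, the number of admissible maps is |AM(𝒜, m)| = 2^{a(2^m − 2)} · m^b. -/

import Mathlib

/-!
A chamber is the same as a realizable sign vector, so an admissible map is the same as a family of
unanimous rules `f j : B^m → B` that sends `m` realizable sign vectors to a realizable one; `f j`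
is `φⱼ⁺`, and the condition on `φⱼ⁻` is unanimity of `f j` at the all-minus vector. Because the
rank is additive over the parts, signs on different parts can be realized independently, and the
families may be counted part by part.

On a one-element part any unanimous rule is allowed: `2^(2^m - 2)` choices. On an indecomposable
part with at least three elements the rules `f j` are all equal to one and the same projection,
giving `m` choices. Indeed, on a circuit with relation `∑ c j • αⱼ = 0` the realizable sign vectors
are all those other than `± sgn c`. Up to reorientation this is the not-all-equal relation on at
least three coordinates, and an Arrow-type argument applies: the rules coincide, are odd, and the
sets of voters on which they output `+` form an ultrafilter on a finite set, which is principal.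
Indecomposability means that every bipartition of the part is crossed by a circuit, so the dictator
is the same for the whole part.
-/

noncomputable section
attribute [local instance] Classical.propDecidable

/-- A (nonempty if `ι` is nonempty) real central arrangement of hyperplanes in `ℝ^ℓ`,
given by a family of nonzero defining linear forms with pairwise distinct kernels
(the hyperplanes `H j = ker (form j)`). -/
structure Arrangement (ℓ : ℕ) (ι : Type) [Fintype ι] where
  form : ι → ((Fin ℓ → ℝ) →ₗ[ℝ] ℝ)
  form_ne_zero : ∀ j, form j ≠ 0
  ker_injective : ∀ j k, LinearMap.ker (form j) = LinearMap.ker (form k) → j = k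

namespace Arrangement

variable {ℓ : ℕ} {ι : Type} [Fintype ι]

/-- The complement `ℝ^ℓ ∖ (H₁ ∪ ⋯ ∪ Hₙ)`. -/
def Complement (A : Arrangement ℓ ι) : Set (Fin ℓ → ℝ) :=
  {x | ∀ j, A.form j x ≠ 0}

/-- A chamber is a connected component of the complement. -/
def IsChamber (A : Arrangement ℓ ι) (C : Set (Fin ℓ → ℝ)) : Prop :=
  ∃ x ∈ A.Complement, C = connectedComponentIn A.Complement x

/-- The set (type) of chambers of the arrangement. -/
abbrev Ch (A : Arrangement ℓ ι) : Type := {C : Set (Fin ℓ → ℝ) // A.IsChamber C}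

/-- `εⱼ^σ(C) = στ` when `C ⊆ Hⱼ^τ`; `B = {+,-}` is realized as `ℤˣ`, `+ = 1`, `- = -1`. -/
def eps (A : Arrangement ℓ ι) (j : ι) (σ : ℤˣ) (C : A.Ch) : ℤˣ :=
  σ * (if ∀ x ∈ C.1, 0 < A.form j x then 1 else -1)

/-- `Φ : Ch^m → Ch` is admissible if there is a family `φⱼ^σ : B^m → B` with
`φⱼ^σ(+,…,+) = +` and `εⱼ^σ ∘ Φ = φⱼ^σ ∘ εⱼ^σ` (componentwise) for all `j, σ`. -/
def IsAdmissible (A : Arrangement ℓ ι) (m : ℕ) (Φ : (Fin m → A.Ch) → A.Ch) : Prop :=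
  ∃ φ : ι → ℤˣ → ((Fin m → ℤˣ) → ℤˣ),
    (∀ j σ, φ j σ (fun _ => 1) = 1) ∧
    ∀ j σ 𝒞, A.eps j σ (Φ 𝒞) = φ j σ (fun i => A.eps j σ (𝒞 i))

/-- `r(ℬ) = codim (⋂_{H ∈ ℬ} H)` for the subarrangement indexed by `S`. -/
def rnkOn (A : Arrangement ℓ ι) (S : Finset ι) : ℕ :=
  ℓ - Module.finrank ℝ ↥(⨅ j ∈ S, LinearMap.ker (A.form j))

/-- `r(𝒜)`. -/
def rnk (A : Arrangement ℓ ι) : ℕ := A.rnkOn Finset.univ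

/-- The subarrangement indexed by `S` decomposes as a disjoint union of two nonempty
subarrangements with additive rank. -/
def DecomposableOn (A : Arrangement ℓ ι) (S : Finset ι) : Prop :=
  ∃ S₁ S₂ : Finset ι, S₁.Nonempty ∧ S₂.Nonempty ∧ Disjoint S₁ S₂ ∧ S₁ ∪ S₂ = S ∧
    A.rnkOn S = A.rnkOn S₁ + A.rnkOn S₂

def IndecomposableOn (A : Arrangement ℓ ι) (S : Finset ι) : Prop := ¬ A.DecomposableOn S

def Decomposable (A : Arrangement ℓ ι) : Prop := A.DecomposableOn Finset.univ

def Indecomposable (A : Arrangement ℓ ι) : Prop := ¬ A.Decomposable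

/-- The subarrangement of `A` consisting of the hyperplanes indexed by `S`. -/
def restrict (A : Arrangement ℓ ι) (S : Finset ι) : Arrangement ℓ {j : ι // j ∈ S} where
  form := fun j => A.form j.1
  form_ne_zero := fun j => A.form_ne_zero j.1
  ker_injective := fun j k h => Subtype.ext (A.ker_injective j.1 k.1 h)

/-- A dependent subarrangement: `r(ℬ) < |ℬ|`. -/
def DependentOn (A : Arrangement ℓ ι) (S : Finset ι) : Prop := A.rnkOn S < S.card

/-- A circuit: a minimally dependent subarrangement. -/
def IsCircuitOn (A : Arrangement ℓ ι) (S : Finset ι) : Prop :=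
  A.DependentOn S ∧ ∀ T ⊂ S, ¬ A.DependentOn T

end Arrangement

namespace AdmissibleMaps

section Sign

variable {G : Type*} [AddCommGroup G] [LinearOrder G]

/-- The sign of an element of an ordered group, as a unit of `ℤ`. The sign of `0` is the junk
value `-1`. -/
def signUnit (t : G) : ℤˣ := if 0 < t then 1 else -1

lemma ne_zero_of_units_smul_pos {t : G} {u : ℤˣ} (h : 0 < u • t) : t ≠ 0 := by
  rintro rfl
  simp at h

variable [IsOrderedAddMonoid G]

lemma units_smul_pos_iff {t : G} (ht : t ≠ 0) (u : ℤˣ) : 0 < u • t ↔ u = signUnit t := by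
  rcases ht.lt_or_gt with h | h <;> rcases Int.units_eq_one_or u with rfl | rfl <;>
    simp [signUnit, h, not_lt_of_gt h]

lemma signUnit_smul_pos {t : G} (ht : t ≠ 0) : 0 < signUnit t • t :=
  (units_smul_pos_iff ht _).2 rfl

lemma signUnit_units_smul {t : G} (ht : t ≠ 0) (u : ℤˣ) : signUnit (u • t) = u * signUnit t := by
  rcases Int.units_eq_one_or u with rfl | rfl <;> rcases ht.lt_or_gt with h | h <;>
    simp [signUnit, h, not_lt_of_gt h]

lemma eq_of_units_smul_pos {t : G} {u v : ℤˣ} (hu : 0 < u • t) (hv : 0 < v • t) : u = v := by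
  have ht := ne_zero_of_units_smul_pos hu
  rw [(units_smul_pos_iff ht u).1 hu, (units_smul_pos_iff ht v).1 hv]

lemma surjective_signUnit_comp_iff {κ : Type*} {a : κ → G} (ha : ∀ j, a j ≠ 0) :
    Function.Surjective (fun j => signUnit (a j)) ↔ (∃ j, 0 < a j) ∧ ∃ j, a j < 0 := by
  have hpos : ∀ j, signUnit (a j) = 1 ↔ 0 < a j := fun j => by
    simpa [eq_comm] using (units_smul_pos_iff (ha j) 1).symm
  have hneg : ∀ j, signUnit (a j) = -1 ↔ a j < 0 := fun j => by
    simpa [eq_comm] using (units_smul_pos_iff (ha j) (-1)).symm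
  refine ⟨fun h => ⟨(h 1).imp fun j => (hpos j).1, (h (-1)).imp fun j => (hneg j).1⟩, ?_⟩
  rintro ⟨hp, hn⟩ u
  rcases Int.units_eq_one_or u with rfl | rfl
  · exact hp.imp fun j => (hpos j).2
  · exact hn.imp fun j => (hneg j).2

end Sign

section Arrow

variable {W : Type*}

/-- A voting rule `B^W → B` is unanimous if it returns `c` whenever every voter chooses `c`. -/
def IsUnanimous (g : (W → ℤˣ) → ℤˣ) : Prop := ∀ c, g (Function.const W c) = c

/-- The ballot on which exactly the members of the coalition `S` vote `+`. -/
def coalitionBallot (S : Set W) : W → ℤˣ := fun i => if i ∈ S then 1 else -1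

lemma coalitionBallot_setOf_eq_one (w : W → ℤˣ) : coalitionBallot {i | w i = 1} = w := by
  funext i
  rcases Int.units_eq_one_or (w i) with h | h <;> simp [coalitionBallot, h]

lemma coalitionBallot_univ : coalitionBallot (Set.univ : Set W) = Function.const W 1 := by
  funext i
  simp [coalitionBallot]

lemma coalitionBallot_compl (S : Set W) : coalitionBallot Sᶜ = -coalitionBallot S := by
  funext i
  by_cases h : i ∈ S <;> simp [coalitionBallot, h]

-- The winning sets form an ultrafilter on a finite set, which is principal.
lemma exists_forall_iff_mem_of_compl_iff_not [Finite W] {Wins : Set W → Prop}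
    (huniv : Wins Set.univ) (hcompl : ∀ S, Wins Sᶜ ↔ ¬ Wins S)
    (hthree : ∀ R S T, Wins R → Wins S → Wins T → R ∪ S ∪ T = Set.univ → (R ∩ S ∩ T).Nonempty) :
    ∃ d, ∀ S, Wins S ↔ d ∈ S := by
  let F : Filter W :=
    { sets := {S | Wins S}
      univ_sets := huniv
      sets_of_superset := fun {S T} hS hST => by
        by_contra hT
        obtain ⟨i, ⟨hi, hi'⟩, -⟩ := hthree S Tᶜ Set.univ hS ((hcompl T).2 hT) huniv (by simp)
        exact hi' (hST hi)
      inter_sets := fun {S T} hS hT => by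
        by_contra hST
        obtain ⟨i, hi, hi'⟩ := hthree S T (S ∩ T)ᶜ hS hT ((hcompl _).2 hST)
          (Set.eq_univ_of_subset (Set.union_subset_union_left _
            (Set.inter_subset_left.trans Set.subset_union_left)) (Set.union_compl_self _))
        exact hi' hi }
  obtain ⟨d, hd⟩ := (Ultrafilter.ofComplNotMemIff F fun S =>
    not_iff_comm.1 (hcompl S).symm).eq_pure_of_finite
  refine ⟨d, fun S => ?_⟩
  rw [← Ultrafilter.mem_pure, ← hd]
  rfl

lemma exists_dictator_of_odd [Finite W] {h : (W → ℤˣ) → ℤˣ} (hu : IsUnanimous h)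
    (hodd : ∀ w, h (-w) = -h w)
    (hnae : ∀ u v w : W → ℤˣ, (∀ i c, u i = c ∨ v i = c ∨ w i = c) →
      ∀ c, h u = c ∨ h v = c ∨ h w = c) :
    ∃ d, h = Function.eval d := by
  obtain ⟨d, hd⟩ := exists_forall_iff_mem_of_compl_iff_not
    (Wins := fun S => h (coalitionBallot S) = 1)
    (by simpa only [coalitionBallot_univ] using hu 1)
    (fun S => by
      simp only [coalitionBallot_compl, hodd, ← ne_eq, Int.units_ne_iff_eq_neg, neg_eq_iff_eq_neg])
    fun R S T hR hS hT hunion => by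
      by_contra hinter
      have hrow (i : W) (c : ℤˣ) : coalitionBallot R i = c ∨ coalitionBallot S i = c ∨
          coalitionBallot T i = c := by
        have hi_union : (i ∈ R ∨ i ∈ S) ∨ i ∈ T := Set.eq_univ_iff_forall.1 hunion i
        have hi_inter : ¬((i ∈ R ∧ i ∈ S) ∧ i ∈ T) := fun hi => hinter ⟨i, hi⟩
        clear hunion hinter
        rcases Int.units_eq_one_or c with rfl | rfl <;> simp only [coalitionBallot] <;>
          split_ifs <;> simp_all
      simpa [hR, hS, hT] using hnae _ _ _ hrow (-1)
  refine ⟨d, funext fun w => ?_⟩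
  have hw : h w = 1 ↔ w d = 1 := by
    simpa only [coalitionBallot_setOf_eq_one, Set.mem_ofPred_eq] using hd {i | w i = 1}
  rcases Int.units_eq_one_or (h w) with h₁ | h₁ <;>
    rcases Int.units_eq_one_or (w d) with h₂ | h₂ <;> simp_all

variable {κ : Type*}

-- Test the hypothesis on the profile that is `u` at `j`, `v` at `k` and `w` everywhere else.
lemma exists_apply_eq_of_surjective_preserving {g : κ → (W → ℤˣ) → ℤˣ}
    (hg : ∀ v : W → κ → ℤˣ, (∀ i, Function.Surjective (v i)) →
      Function.Surjective fun j => g j fun i => v i j)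
    {j k l : κ} (hkj : k ≠ j) (hlj : l ≠ j) (hlk : l ≠ k) {u v w : W → ℤˣ}
    (h : ∀ i c, u i = c ∨ v i = c ∨ w i = c) (c : ℤˣ) :
    g j u = c ∨ g k v = c ∨ ∃ p, g p w = c := by
  obtain ⟨p, hp⟩ := hg (fun i p => if p = j then u i else if p = k then v i else w i) (fun i c => by
    rcases h i c with h | h | h
    · exact ⟨j, by simp [h]⟩
    · exact ⟨k, by simp [h, hkj]⟩
    · exact ⟨l, by simp [h, hlj, hlk]⟩) c
  rcases eq_or_ne p j with rfl | hpj
  · simp_all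
  · rcases eq_or_ne p k with rfl | hpk
    · simp_all
    · exact .inr (.inr ⟨p, by simp_all⟩)

theorem exists_dictator_of_surjective_preserving [Finite W] (hκ : 3 ≤ ENat.card κ)
    {g : κ → (W → ℤˣ) → ℤˣ} (hu : ∀ j, IsUnanimous (g j))
    (hg : ∀ v : W → κ → ℤˣ, (∀ i, Function.Surjective (v i)) →
      Function.Surjective fun j => g j fun i => v i j) :
    ∃ d, ∀ j, g j = Function.eval d := by
  have flip {j k : κ} (hkj : k ≠ j) (w : W → ℤˣ) : g k (-w) = -g j w := by
    obtain ⟨l, hlj, hlk⟩ := ENat.exists_ne_ne_of_three_le hκ j k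
    have hrow (i : W) (c : ℤˣ) : w i = c ∨ (-w) i = c ∨ Function.const W (g j w) i = c := by
      by_cases hc : w i = c
      · exact .inl hc
      · exact .inr (.inl (by rw [Pi.neg_apply, Int.units_ne_iff_eq_neg.1 hc, neg_neg]))
    rcases exists_apply_eq_of_surjective_preserving hg hkj hlj hlk hrow (-g j w) with
      h | h | ⟨p, h⟩
    · exact absurd h (units_ne_neg_self _)
    · exact h
    · exact absurd ((hu p _).symm.trans h) (units_ne_neg_self _)
  have all_eq (j k : κ) : g j = g k := by
    obtain ⟨l, hlj, hlk⟩ := ENat.exists_ne_ne_of_three_le hκ j k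
    funext w
    rw [← neg_inj, ← flip hlj, ← flip hlk]
  have : Nontrivial κ :=
    (ENat.one_lt_card_iff_nontrivial κ).1 (lt_of_lt_of_le (by norm_num) hκ)
  obtain ⟨j⟩ := this.to_nonempty
  obtain ⟨k, hkj, -⟩ := ENat.exists_ne_ne_of_three_le hκ j j
  obtain ⟨l, hlj, hlk⟩ := ENat.exists_ne_ne_of_three_le hκ j k
  obtain ⟨d, hd⟩ := exists_dictator_of_odd (hu j) (fun w => by rw [← flip hkj, all_eq j k])
    fun u v w h c => by
      have := exists_apply_eq_of_surjective_preserving hg hkj hlj hlk h c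
      simpa only [all_eq _ j, exists_const] using this
  exact ⟨d, fun j' => (all_eq j' j).trans hd⟩

end Arrow

section Circuit

variable {K M ι : Type*}

/-- A circuit of a family of vectors: a minimal linearly dependent finite set of indices. -/
def IsCircuit (K : Type*) {M ι : Type*} [Ring K] [AddCommGroup M] [Module K M] (v : ι → M)
    (C : Finset ι) : Prop :=
  Minimal (fun T : Finset ι => ¬ LinearIndepOn K v T) C

/-- A family of vectors is connected if it does not split into two nonempty subfamilies whose
spans meet trivially. -/
def IsConnectedFamily (K : Type*) {M ι : Type*} [Ring K] [AddCommGroup M] [Module K M]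
    (v : ι → M) : Prop :=
  ∀ T : Set ι, T.Nonempty → Tᶜ.Nonempty →
    ¬ Disjoint (Submodule.span K (v '' T)) (Submodule.span K (v '' Tᶜ))

section Ring

variable [Ring K] [AddCommGroup M] [Module K M] {v : ι → M} {C : Finset ι}

lemma exists_isCircuit_subset {s : Set ι} (h : ¬ LinearIndepOn K v s) :
    ∃ C : Finset ι, IsCircuit K v C ∧ (C : Set ι) ⊆ s := by
  rw [linearIndepOn_iff_linearIndepOn_finset] at h
  push Not at h
  obtain ⟨T, hTs, hT⟩ := h
  obtain ⟨C, hCT, hC⟩ := exists_minimal_le_of_wellFoundedLT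
    (fun T : Finset ι => ¬ LinearIndepOn K v T) T hT
  exact ⟨C, hC, (Finset.coe_subset.2 hCT).trans hTs⟩

lemma IsCircuit.not_subset (hC : IsCircuit K v C) {s : Set ι} (hs : LinearIndepOn K v s) :
    ¬ (C : Set ι) ⊆ s :=
  fun h => hC.prop (hs.mono h)

lemma IsCircuit.relation_eq_zero (hC : IsCircuit K v C) {d : C → K} (hd : ∑ j, d j • v j = 0)
    {l : C} (hl : d l = 0) : d = 0 := by
  have hind : LinearIndepOn K v (C.erase l : Finset ι) :=
    not_not.1 (hC.not_prop_of_lt (Finset.erase_ssubset l.2))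
  let incl (j : {j : C // j ≠ l}) : ((C.erase l : Finset ι) : Set ι) :=
    ⟨j, Finset.mem_coe.2 (Finset.mem_erase.2 ⟨Subtype.coe_injective.ne j.2, j.1.2⟩)⟩
  have hcompl : LinearIndependent K fun j : {j : C // j ≠ l} => v j :=
    LinearIndependent.comp hind incl fun j k h =>
      Subtype.ext (Subtype.ext (by simpa [incl] using h))
  rw [Fintype.sum_eq_add_sum_subtype_ne _ l, hl, zero_smul, zero_add] at hd
  funext j
  rcases eq_or_ne j l with rfl | hj
  · exact hl
  · exact Fintype.linearIndependent_iff.1 hcompl (fun j => d j) hd ⟨j, hj⟩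

lemma IsCircuit.three_le_card (hC : IsCircuit K v C)
    (hv : Pairwise fun j l => LinearIndepOn K v {j, l}) {j l : ι} (hj : j ∈ C) (hl : l ∈ C)
    (hjl : j ≠ l) : 3 ≤ C.card := by
  by_contra! hcard
  have hpair : {j, l} = C := Finset.eq_of_subset_of_card_le (by simp [Finset.insert_subset_iff, *])
    (by rw [Finset.card_pair hjl]; omega)
  exact hC.not_subset (hv hjl) (by simp [← hpair])

end Ring

lemma IsCircuit.exists_relation_iff [Field K] [AddCommGroup M] [Module K M] {v : ι → M}
    {C : Finset ι} (hC : IsCircuit K v C) :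
    ∃ c : C → K, (∀ j, c j ≠ 0) ∧ ∀ d : C → K, ∑ j, d j • v j = 0 ↔ ∃ r : K, d = r • c := by
  obtain ⟨c, hc, l, hl⟩ : ∃ c : C → K, ∑ j, c j • v j = 0 ∧ ∃ l, c l ≠ 0 :=
    Fintype.not_linearIndependent_iff.1 hC.prop
  refine ⟨c, fun j hj => hl (congrFun (hC.relation_eq_zero hc hj) l), fun d => ⟨fun hd => ?_, ?_⟩⟩
  · refine ⟨d l / c l, sub_eq_zero.1 (hC.relation_eq_zero (l := l) ?_ ?_)⟩
    · simp only [Pi.sub_apply, Pi.smul_apply, smul_eq_mul, sub_smul, mul_smul,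
        Finset.sum_sub_distrib, ← Finset.smul_sum, hc, hd, smul_zero, sub_zero]
    · simp [hl]
  · rintro ⟨r, rfl⟩
    simp only [Pi.smul_apply, smul_assoc, ← Finset.smul_sum, hc, smul_zero]

variable [DivisionRing K] [AddCommGroup M] [Module K M] {v : ι → M}

-- A circuit in the union of bases of the two sides lies in neither basis.
lemma exists_isCircuit_crossing {T : Set ι}
    (hT : ¬ Disjoint (Submodule.span K (v '' T)) (Submodule.span K (v '' Tᶜ))) :
    ∃ C, IsCircuit K v C ∧ (∃ j ∈ C, j ∈ T) ∧ ∃ l ∈ C, l ∉ T := by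
  have exists_basis (s : Set ι) : ∃ B ⊆ s, LinearIndepOn K v B ∧
      Submodule.span K (v '' B) = Submodule.span K (v '' s) :=
    have h₀ := linearIndepOn_empty K v
    ⟨h₀.extend s.empty_subset, h₀.extend_subset _, h₀.linearIndepOn_extend _,
      h₀.span_image_extend_eq_span_image _⟩
  obtain ⟨B₁, hB₁, hind₁, hspan₁⟩ := exists_basis T
  obtain ⟨B₂, hB₂, hind₂, hspan₂⟩ := exists_basis Tᶜ
  have hdep : ¬ LinearIndepOn K v (B₁ ∪ B₂) := by
    rw [linearIndepOn_union_iff (disjoint_compl_right.mono hB₁ hB₂), hspan₁, hspan₂]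
    exact fun h => hT h.2.2
  obtain ⟨C, hC, hCB⟩ := exists_isCircuit_subset hdep
  obtain ⟨j, hj, hj₂⟩ := Set.not_subset.1 (hC.not_subset hind₂)
  obtain ⟨l, hl, hl₁⟩ := Set.not_subset.1 (hC.not_subset hind₁)
  exact ⟨C, hC, ⟨j, hj, hB₁ ((hCB hj).resolve_right hj₂)⟩,
    ⟨l, hl, hB₂ ((hCB hl).resolve_left hl₁)⟩⟩

end Circuit

section LinearSystem

variable {K V κ : Type*} [Field K] [AddCommGroup V] [Module K V] [Fintype κ]

-- The image of `V` in `K^κ` is cut out by the functionals that vanish on it.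
lemma exists_forall_apply_eq_iff (α : κ → Module.Dual K V) (t : κ → K) :
    (∃ x, ∀ j, α j x = t j) ↔ ∀ d : κ → K, ∑ j, d j • α j = 0 → ∑ j, d j * t j = 0 := by
  constructor
  · rintro ⟨x, hx⟩ d hd
    simpa [hx] using LinearMap.congr_fun hd x
  · intro h
    suffices t ∈ LinearMap.range (LinearMap.pi α) from this.imp fun x hx j => congrFun hx j
    by_contra ht
    obtain ⟨φ, hφt, hφ⟩ := Submodule.exists_le_ker_of_notMem ht
    have hφ_sum (u : κ → K) : φ u = ∑ j, φ (fun k => if j = k then 1 else 0) * u j := by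
      simp only [φ.pi_apply_eq_sum_univ u, smul_eq_mul, mul_comm]
    refine hφt ((hφ_sum t).trans (h _ (LinearMap.ext fun x => ?_)))
    simp only [LinearMap.sum_apply, LinearMap.smul_apply, smul_eq_mul, LinearMap.zero_apply]
    exact (hφ_sum (LinearMap.pi α x)).symm.trans (hφ ⟨x, rfl⟩)

lemma exists_forall_sub_mem_of_finrank_quotient_iInf [FiniteDimensional K V]
    {U : κ → Submodule K V}
    (h : Module.finrank K (V ⧸ ⨅ i, U i) = ∑ i, Module.finrank K (V ⧸ U i)) (y : κ → V) :
    ∃ x, ∀ i, x - y i ∈ U i := by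
  let L : V →ₗ[K] ∀ i, V ⧸ U i := LinearMap.pi fun i => (U i).mkQ
  have hker : LinearMap.ker L = ⨅ i, U i := by simp [L, LinearMap.ker_pi]
  have hrange : LinearMap.range L = ⊤ := by
    apply Submodule.eq_top_of_finrank_eq
    rw [Module.finrank_pi_fintype, ← h, ← hker, L.quotKerEquivRange.finrank_eq]
  obtain ⟨x, hx⟩ := LinearMap.range_eq_top.1 hrange fun i => (U i).mkQ (y i)
  exact ⟨x, fun i => (Submodule.Quotient.eq _).1 (congrFun hx i)⟩

-- If `∑ aⱼ > 0`, enlarging the coordinate `1` where `aⱼ < 0` gives a zero; and symmetrically.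
lemma exists_pos_sum_mul_eq_zero_iff [Nonempty κ] [LinearOrder K] [IsStrictOrderedRing K]
    {a : κ → K} (ha : ∀ j, a j ≠ 0) :
    (∃ p : κ → K, (∀ j, 0 < p j) ∧ ∑ j, a j * p j = 0) ↔ (∃ j, 0 < a j) ∧ ∃ j, a j < 0 := by
  constructor
  · rintro ⟨p, hp, hsum⟩
    by_contra! hcon
    by_cases hpos : ∃ j, 0 < a j
    · have : 0 < ∑ j, a j * p j := Finset.sum_pos (fun j _ =>
        mul_pos ((hcon hpos j).lt_of_ne' (ha j)) (hp j)) Finset.univ_nonempty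
      exact this.ne' hsum
    · push Not at hpos
      have : ∑ j, a j * p j < 0 := Finset.sum_neg (fun j _ =>
        mul_neg_of_neg_of_pos ((hpos j).lt_of_ne (ha j)) (hp j)) Finset.univ_nonempty
      exact this.ne hsum
  · rintro ⟨⟨j, hj⟩, k, hk⟩
    obtain ⟨l, hl⟩ : ∃ l, 0 ≤ -(∑ i, a i) / a l := by
      rcases le_total (∑ i, a i) 0 with h | h
      · exact ⟨j, div_nonneg (neg_nonneg.2 h) hj.le⟩
      · exact ⟨k, div_nonneg_of_nonpos (neg_nonpos.2 h) hk.le⟩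
    refine ⟨1 + Pi.single l (-(∑ i, a i) / a l), fun i => ?_, ?_⟩
    · have hsingle : (0 : κ → K) ≤ Pi.single l (-(∑ i, a i) / a l) := Pi.single_nonneg.2 hl
      exact add_pos_of_pos_of_nonneg one_pos (hsingle i)
    · simp [mul_add, Finset.sum_add_distrib, Pi.single_apply, mul_div_cancel₀ _ (ha l)]

end LinearSystem

section Realizable

variable {V ι κ : Type*} [AddCommGroup V] [Module ℝ V]

/-- The set of points at which the linear forms `α` take the signs `s`. -/
def signCell (α : ι → Module.Dual ℝ V) (s : ι → ℤˣ) : Set V := {x | ∀ j, 0 < s j • α j x}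

/-- A sign vector is realizable if the forms `α` take these signs at some point. -/
def IsRealizable (α : ι → Module.Dual ℝ V) (s : ι → ℤˣ) : Prop := (signCell α s).Nonempty

variable {α : ι → Module.Dual ℝ V}

lemma convex_signCell (α : ι → Module.Dual ℝ V) (s : ι → ℤˣ) : Convex ℝ (signCell α s) := by
  simp only [signCell, Set.ofPred_forall]
  exact convex_iInter fun j => convex_halfSpace_gt
    (f := fun x => s j • α j x) ⟨by simp, fun c x => by simp [mul_smul_comm]⟩ 0

lemma IsRealizable.comp {s : ι → ℤˣ} (hs : IsRealizable α s) (e : κ → ι) :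
    IsRealizable (α ∘ e) (s ∘ e) :=
  hs.imp fun _ hx k => hx (e k)

-- Move `x` a little in a direction in which no form vanishes.
lemma exists_isRealizable_of_pos [Finite ι] (hα : ∀ j, α j ≠ 0) (x : V) :
    ∃ s, IsRealizable α s ∧ ∀ j u, 0 < u • α j x → s j = u := by
  obtain ⟨y, hy⟩ := Module.Dual.exists_forall_ne_zero_of_forall_exists α fun j => by
    simpa [LinearMap.ext_iff] using hα j
  have hne : ∀ᶠ δ : ℝ in nhdsWithin 0 {0}ᶜ, ∀ j, α j (x + δ • y) ≠ 0 := by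
    refine Filter.eventually_all.2 fun j => nhdsNE_le_cofinite 0 ?_
    filter_upwards [Filter.eventually_cofinite_ne (-α j x / α j y)] with δ hδ h
    refine hδ (eq_div_of_mul_eq (hy j) (eq_neg_of_add_eq_zero_right ?_))
    simpa using h
  have hpos : ∀ᶠ δ : ℝ in nhdsWithin 0 {0}ᶜ, ∀ j, ∀ u : ℤˣ, 0 < u • α j x →
      0 < u • α j (x + δ • y) := by
    refine Filter.eventually_all.2 fun j => Filter.eventually_all.2 fun u =>
      Filter.eventually_imp_distrib_left.2 fun h => ?_
    have hcont : Continuous fun δ : ℝ => u • α j (x + δ • y) := by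
      simp only [map_add, map_smul, smul_eq_mul]
      fun_prop
    exact hcont.continuousWithinAt.eventually_const_lt (by simpa using h)
  obtain ⟨δ, hδ, hδ_pos⟩ := (hne.and hpos).exists
  exact ⟨fun j => signUnit (α j (x + δ • y)), ⟨_, fun j => signUnit_smul_pos (hδ j)⟩,
    fun j u h => eq_of_units_smul_pos (signUnit_smul_pos (hδ j)) (hδ_pos j u h)⟩

lemma IsRealizable.exists_comp_eq [Finite ι] (hα : ∀ j, α j ≠ 0) {e : κ → ι} {s : κ → ℤˣ}
    (hs : IsRealizable (α ∘ e) s) : ∃ s', IsRealizable α s' ∧ s' ∘ e = s := by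
  obtain ⟨x, hx⟩ := hs
  obtain ⟨s', hs', hx'⟩ := exists_isRealizable_of_pos hα x
  exact ⟨s', hs', funext fun k => hx' (e k) _ (hx k)⟩

lemma exists_isRealizable_apply_eq [Finite ι] (hα : ∀ j, α j ≠ 0) (j : ι) (c : ℤˣ) :
    ∃ s, IsRealizable α s ∧ s j = c := by
  obtain ⟨x, hx⟩ := DFunLike.ne_iff.1 (hα j)
  obtain ⟨s, hs, hsx⟩ := exists_isRealizable_of_pos hα ((c * signUnit (α j x)) • x)
  refine ⟨s, hs, hsx j c ?_⟩
  rw [map_zsmul_unit, smul_smul, ← mul_assoc, Int.units_mul_self, one_mul]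
  exact signUnit_smul_pos hx

lemma isRealizable_of_unique [Unique ι] (hα : ∀ j, α j ≠ 0) (s : ι → ℤˣ) : IsRealizable α s := by
  obtain ⟨s', hs', h⟩ := exists_isRealizable_apply_eq hα default (s default)
  rwa [eq_const_of_unique s', h, ← eq_const_of_unique s] at hs'

lemma isRealizable_sigma_iff [FiniteDimensional ℝ V] [Fintype κ] {β : κ → Type*}
    {α : (Σ i, β i) → Module.Dual ℝ V}
    (hrank : Module.finrank ℝ (V ⧸ ⨅ p, LinearMap.ker (α p)) =
      ∑ i, Module.finrank ℝ (V ⧸ ⨅ j, LinearMap.ker (α ⟨i, j⟩))) {s : (Σ i, β i) → ℤˣ} :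
    IsRealizable α s ↔ ∀ i, IsRealizable (fun j => α ⟨i, j⟩) fun j => s ⟨i, j⟩ := by
  refine ⟨fun hs i => hs.comp (Sigma.mk i), fun hs => ?_⟩
  choose y hy using hs
  rw [iInf_sigma] at hrank
  obtain ⟨x, hx⟩ := exists_forall_sub_mem_of_finrank_quotient_iInf hrank y
  refine ⟨x, fun ⟨i, j⟩ => ?_⟩
  have hxy : α ⟨i, j⟩ (x - y i) = 0 := (Submodule.mem_iInf _).1 (hx i) j
  rw [sub_eq_zero.1 ((map_sub _ _ _).symm.trans hxy)]
  exact hy i j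

lemma IsCircuit.exists_isRealizable_iff {C : Finset ι} (hC : IsCircuit ℝ α C) :
    ∃ ε : C → ℤˣ, ∀ s : C → ℤˣ,
      IsRealizable (fun j : C => α j) s ↔ Function.Surjective fun j => s j * ε j := by
  obtain ⟨c, hc, hrel⟩ := hC.exists_relation_iff
  have : Nonempty C := Finset.nonempty_coe_sort.2 <| Finset.nonempty_iff_ne_empty.2 <| by
    rintro rfl
    exact hC.prop (by simp)
  refine ⟨fun j => signUnit (c j), fun s => ?_⟩
  have hvalue (p : C → ℝ) :
      (∃ x, ∀ j : C, s j • α j x = p j) ↔ ∑ j, s j • c j * p j = 0 := by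
    have hx (x : V) : (∀ j : C, s j • α j x = p j) ↔ ∀ j : C, α j x = s j • p j :=
      forall_congr' fun j => by rw [smul_eq_iff_eq_inv_smul, Int.units_inv_eq_self]
    simp only [hx]
    rw [exists_forall_apply_eq_iff (fun j : C => α j)]
    simp only [hrel, forall_exists_index, smul_mul_assoc, mul_smul_comm]
    refine ⟨fun h => h c 1 (one_smul _ c).symm, ?_⟩
    rintro h d r rfl
    simpa only [Pi.smul_apply, smul_eq_mul, mul_assoc, Finset.mul_sum, mul_smul_comm, mul_zero]
      using congrArg (r * ·) h
  calc IsRealizable (fun j : C => α j) s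
      ↔ ∃ p : C → ℝ, (∀ j, 0 < p j) ∧ ∃ x, ∀ j : C, s j • α j x = p j :=
        ⟨fun ⟨x, hx⟩ => ⟨_, hx, x, fun _ => rfl⟩, fun ⟨_, hp, x, hx⟩ => ⟨x, fun j => hx j ▸ hp j⟩⟩
    _ ↔ (∃ j, 0 < s j • c j) ∧ ∃ j, s j • c j < 0 := by
      simp only [hvalue]
      exact exists_pos_sum_mul_eq_zero_iff fun j => (smul_ne_zero_iff_ne _).2 (hc j)
    _ ↔ Function.Surjective fun j => s j * signUnit (c j) := by
      rw [← surjective_signUnit_comp_iff fun j => (smul_ne_zero_iff_ne _).2 (hc j)]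
      simp only [signUnit_units_smul (hc _)]

end Realizable

section Aggregator

variable {V ι κ W : Type*} [AddCommGroup V] [Module ℝ V] {α : ι → Module.Dual ℝ V}
  {f : ι → (W → ℤˣ) → ℤˣ}

/-- An aggregator decides the sign of each form separately, by a unanimous voting rule `f j`, and
turns realizable sign vectors, one for each voter in `W`, into a realizable sign vector. -/
structure IsAggregator (α : ι → Module.Dual ℝ V) (f : ι → (W → ℤˣ) → ℤˣ) : Prop where
  isUnanimous : ∀ j, IsUnanimous (f j)
  isRealizable : ∀ v : W → ι → ℤˣ, (∀ i, IsRealizable α (v i)) →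
    IsRealizable α fun j => f j fun i => v i j

lemma isAggregator_eval (α : ι → Module.Dual ℝ V) (d : W) :
    IsAggregator α fun _ => Function.eval d :=
  ⟨fun _ _ => rfl, fun _ hv => hv d⟩

lemma IsAggregator.comp [Finite ι] (hα : ∀ j, α j ≠ 0) (hf : IsAggregator α f) (e : κ → ι) :
    IsAggregator (α ∘ e) (f ∘ e) where
  isUnanimous k := hf.isUnanimous (e k)
  isRealizable v hv := by
    choose v' hv' hcomp using fun i => (hv i).exists_comp_eq hα
    obtain rfl : (fun i => v' i ∘ e) = v := funext hcomp
    exact (hf.isRealizable v' hv').comp e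

lemma isAggregator_comp_equiv_iff [Finite ι] (hα : ∀ j, α j ≠ 0) (e : κ ≃ ι) :
    IsAggregator (α ∘ e) (f ∘ e) ↔ IsAggregator α f := by
  have := Finite.of_equiv ι e.symm
  refine ⟨fun h => ?_, fun h => h.comp hα e⟩
  simpa [Function.comp_assoc] using IsAggregator.comp (α := α ∘ e) (fun k => hα (e k)) h e.symm

lemma isAggregator_iff_of_unique [Unique ι] (hα : ∀ j, α j ≠ 0) :
    IsAggregator α f ↔ ∀ j, IsUnanimous (f j) :=
  ⟨IsAggregator.isUnanimous, fun h => ⟨h, fun _ _ => isRealizable_of_unique hα _⟩⟩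

section Sigma

variable [FiniteDimensional ℝ V] [Fintype κ] {β : κ → Type*} [Finite (Σ i, β i)]
  {α : (Σ i, β i) → Module.Dual ℝ V}

lemma isAggregator_sigma_iff (hα : ∀ p, α p ≠ 0)
    (hrank : Module.finrank ℝ (V ⧸ ⨅ p, LinearMap.ker (α p)) =
      ∑ i, Module.finrank ℝ (V ⧸ ⨅ j, LinearMap.ker (α ⟨i, j⟩)))
    {f : (Σ i, β i) → (W → ℤˣ) → ℤˣ} :
    IsAggregator α f ↔ ∀ i, IsAggregator (fun j => α ⟨i, j⟩) fun j => f ⟨i, j⟩ := by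
  refine ⟨fun h i => h.comp hα (Sigma.mk i), fun h => ⟨fun p => (h p.1).isUnanimous p.2, ?_⟩⟩
  intro v hv
  exact (isRealizable_sigma_iff hrank).2 fun i => (h i).isRealizable _ fun k =>
    (hv k).comp (Sigma.mk i)

lemma card_isAggregator_sigma (hα : ∀ p, α p ≠ 0)
    (hrank : Module.finrank ℝ (V ⧸ ⨅ p, LinearMap.ker (α p)) =
      ∑ i, Module.finrank ℝ (V ⧸ ⨅ j, LinearMap.ker (α ⟨i, j⟩))) :
    Nat.card {f : (Σ i, β i) → (W → ℤˣ) → ℤˣ // IsAggregator α f} =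
      ∏ i, Nat.card {g : β i → (W → ℤˣ) → ℤˣ // IsAggregator (fun j => α ⟨i, j⟩) g} := by
  rw [← Nat.card_pi]
  exact Nat.card_congr (((Equiv.piCurry fun i (_ : β i) => (W → ℤˣ) → ℤˣ).subtypeEquiv fun f =>
    isAggregator_sigma_iff hα hrank).trans Equiv.subtypePiEquivPi)

end Sigma

lemma card_isAggregator_comp_equiv [Finite ι] (hα : ∀ j, α j ≠ 0) (e : κ ≃ ι) :
    Nat.card {f : κ → (W → ℤˣ) → ℤˣ // IsAggregator (α ∘ e) f} =
      Nat.card {f : ι → (W → ℤˣ) → ℤˣ // IsAggregator α f} :=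
  (Nat.card_congr ((e.arrowCongr (.refl _)).symm.subtypeEquiv fun _ =>
    (isAggregator_comp_equiv_iff hα e).symm)).symm

-- The values on the two constant ballots are prescribed, and the others are free.
lemma card_isUnanimous [Finite W] [Nonempty W] :
    Nat.card {g : (W → ℤˣ) → ℤˣ // IsUnanimous g} = 2 ^ (2 ^ Nat.card W - 2) := by
  let const : ℤˣ → W → ℤˣ := Function.const W
  have hconst : Function.Injective const := Function.const_injective
  let p : (W → ℤˣ) → Prop := (· ∈ Set.range const)
  let x₀ : {w // p w} → ℤˣ := (Equiv.ofInjective const hconst).symm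
  have hunan (g : (W → ℤˣ) → ℤˣ) : IsUnanimous g ↔ g ∘ Subtype.val = x₀ := by
    rw [funext_iff, ← (Equiv.ofInjective const hconst).forall_congr_right]
    simp [x₀, IsUnanimous, const]
  have hcard : Nat.card {w // ¬ p w} = 2 ^ Nat.card W - 2 := by
    change Nat.card ((Set.range const)ᶜ : Set (W → ℤˣ)) = _
    rw [Nat.card_coe_set_eq, Set.ncard_compl, ← Nat.card_coe_set_eq,
      Nat.card_range_of_injective hconst]
    simp [Nat.card_fun]
  rw [Nat.card_congr ((Equiv.subtypeEquivRight hunan).trans (Equiv.subtypePreimage p x₀)),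
    Nat.card_fun, hcard]
  simp

lemma card_isAggregator_of_unique [Finite W] [Nonempty W] [Unique ι] (hα : ∀ j, α j ≠ 0) :
    Nat.card {f : ι → (W → ℤˣ) → ℤˣ // IsAggregator α f} = 2 ^ (2 ^ Nat.card W - 2) := by
  rw [← card_isUnanimous (W := W)]
  exact Nat.card_congr ((Equiv.funUnique ι _).subtypeEquiv fun f => by
    simp [isAggregator_iff_of_unique hα, Unique.forall_iff])

lemma IsCircuit.exists_dictator [Finite W] {C : Finset ι} (hC : IsCircuit ℝ α C)
    (hcard : 3 ≤ C.card) {f : C → (W → ℤˣ) → ℤˣ} (hf : IsAggregator (fun j : C => α j) f) :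
    ∃ d, ∀ j, f j = Function.eval d := by
  obtain ⟨ε, hε⟩ := hC.exists_isRealizable_iff
  have hcancel (u : ℤˣ) (j : C) : u * ε j * ε j = u := by
    rw [mul_assoc, Int.units_mul_self, mul_one]
  obtain ⟨d, hd⟩ := exists_dictator_of_surjective_preserving (by simpa using hcard)
    (g := fun j w => f j (fun i => w i * ε j) * ε j)
    (fun j c => (congrArg (· * ε j) (hf.isUnanimous j (c * ε j))).trans (hcancel c j))
    fun v hv => (hε _).1 (hf.isRealizable (fun i j => v i j * ε j) fun i => (hε _).2 (by
      simpa only [hcancel] using hv i))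
  refine ⟨d, fun j => funext fun w => mul_right_cancel (b := ε j) ?_⟩
  simpa only [hcancel] using congrFun (hd j) fun i => w i * ε j

-- A circuit crossing from the forms governed by `d` to the others would carry a second dictator.
lemma IsAggregator.exists_dictator [Finite ι] [Finite W] [Nontrivial ι]
    (hconn : IsConnectedFamily ℝ α) (hpair : Pairwise fun j l => LinearIndepOn ℝ α {j, l})
    (hf : IsAggregator α f) : ∃ d, ∀ j, f j = Function.eval d := by
  have hα (j : ι) : α j ≠ 0 := by
    obtain ⟨l, hl⟩ := exists_ne j
    exact (hpair hl.symm).ne_zero (by simp)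
  have dictator_crossing (T : Set ι) (hT : T.Nonempty) (hT' : Tᶜ.Nonempty) :
      ∃ d, (∃ j ∈ T, f j = Function.eval d) ∧ ∃ l ∉ T, f l = Function.eval d := by
    obtain ⟨C, hC, ⟨j, hj, hjT⟩, l, hl, hlT⟩ := exists_isCircuit_crossing (hconn T hT hT')
    obtain ⟨d, hd⟩ := hC.exists_dictator
      (hC.three_le_card hpair hj hl fun h => hlT (h ▸ hjT)) (hf.comp hα _)
    exact ⟨d, ⟨j, hjT, hd ⟨j, hj⟩⟩, l, hlT, hd ⟨l, hl⟩⟩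
  obtain ⟨j, l, hjl⟩ := exists_pair_ne ι
  obtain ⟨d, ⟨k, -, hk⟩, -⟩ := dictator_crossing {j} ⟨j, rfl⟩ ⟨l, hjl.symm⟩
  refine ⟨d, ?_⟩
  by_contra! hother
  obtain ⟨d', ⟨p, hp, hpd'⟩, q, hq, hqd'⟩ :=
    dictator_crossing {j | f j = Function.eval d} ⟨k, hk⟩ hother
  exact hq (hqd'.trans (hpd'.symm.trans hp))

lemma eval_injective : Function.Injective (Function.eval : W → (W → ℤˣ) → ℤˣ) := by
  intro d d' h
  simpa [coalitionBallot, eq_comm] using congrFun h (coalitionBallot {d})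

lemma IsConnectedFamily.card_isAggregator [Finite ι] [Finite W] [Nontrivial ι]
    (hconn : IsConnectedFamily ℝ α) (hpair : Pairwise fun j l => LinearIndepOn ℝ α {j, l}) :
    Nat.card {f : ι → (W → ℤˣ) → ℤˣ // IsAggregator α f} = Nat.card W := by
  refine (Nat.card_eq_of_bijective (fun d => ⟨fun _ => Function.eval d, isAggregator_eval α d⟩)
    ⟨fun d d' h => ?_, fun ⟨f, hf⟩ => ?_⟩).symm
  · obtain ⟨j⟩ := ‹Nontrivial ι›.to_nonempty
    exact eval_injective (congrFun (Subtype.ext_iff.1 h) j)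
  · obtain ⟨d, hd⟩ := hf.exists_dictator hconn hpair
    exact ⟨d, Subtype.ext (funext fun j => (hd j).symm)⟩

end Aggregator

end AdmissibleMaps

namespace Arrangement

open AdmissibleMaps

variable {ℓ : ℕ} {ι : Type} [Fintype ι] (A : Arrangement ℓ ι)

section Chamber

lemma eps_eq_mul (j : ι) (σ : ℤˣ) (C : A.Ch) : A.eps j σ C = σ * A.eps j 1 C := by
  simp [eps]

variable {A}

lemma chamber_subset_complement (C : A.Ch) : C.1 ⊆ A.Complement := by
  obtain ⟨_, x, _, rfl⟩ := C
  exact connectedComponentIn_subset _ _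

lemma chamber_nonempty (C : A.Ch) : C.1.Nonempty := by
  obtain ⟨_, x, hx, rfl⟩ := C
  exact ⟨x, mem_connectedComponentIn hx⟩

lemma isPreconnected_chamber (C : A.Ch) : IsPreconnected C.1 := by
  obtain ⟨_, x, _, rfl⟩ := C
  exact isPreconnected_connectedComponentIn

lemma chamber_eq_connectedComponentIn (C : A.Ch) {x : Fin ℓ → ℝ} (hx : x ∈ C.1) :
    C.1 = connectedComponentIn A.Complement x := by
  obtain ⟨_, y, _, rfl⟩ := C
  exact connectedComponentIn_eq hx

lemma signCell_subset_complement (s : ι → ℤˣ) : signCell A.form s ⊆ A.Complement :=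
  fun _ hx j => ne_zero_of_units_smul_pos (hx j)

lemma eps_smul_form_pos (C : A.Ch) {x : Fin ℓ → ℝ} (hx : x ∈ C.1) (j : ι) :
    0 < A.eps j 1 C • A.form j x := by
  rw [eps, one_mul]
  split_ifs with h
  · simpa using h x hx
  · push Not at h
    obtain ⟨y, hy, hy_nonpos⟩ := h
    suffices A.form j x < 0 by simpa
    by_contra! hx_nonneg
    obtain ⟨z, hz, hz_zero⟩ := (isPreconnected_chamber C).intermediate_value hy hx
      (A.form j).continuous_of_finiteDimensional.continuousOn ⟨hy_nonpos, hx_nonneg⟩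
    exact chamber_subset_complement C hz j hz_zero

lemma chamber_eq_signCell (C : A.Ch) : C.1 = signCell A.form fun j => A.eps j 1 C := by
  refine Set.Subset.antisymm (fun x hx => eps_smul_form_pos C hx) ?_
  obtain ⟨x, hx⟩ := chamber_nonempty C
  rw [chamber_eq_connectedComponentIn C hx]
  exact (convex_signCell _ _).isPreconnected.subset_connectedComponentIn (eps_smul_form_pos C hx)
    (signCell_subset_complement _)

lemma chamber_ext {C D : A.Ch} (h : ∀ j, A.eps j 1 C = A.eps j 1 D) : C = D :=
  Subtype.ext <| by rw [chamber_eq_signCell C, chamber_eq_signCell D, funext h]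

lemma isRealizable_iff_exists_chamber {s : ι → ℤˣ} :
    IsRealizable A.form s ↔ ∃ C : A.Ch, ∀ j, A.eps j 1 C = s j := by
  constructor
  · rintro ⟨x, hx⟩
    have hxA := signCell_subset_complement s hx
    exact ⟨⟨_, x, hxA, rfl⟩, fun j => eq_of_units_smul_pos
      (eps_smul_form_pos _ (mem_connectedComponentIn hxA) j) (hx j)⟩
  · rintro ⟨C, hC⟩
    rw [← funext hC, IsRealizable, ← chamber_eq_signCell]
    exact chamber_nonempty C

variable (A) in
lemma exists_chambers_eps_eq {W : Type*} (j : ι) (w : W → ℤˣ) :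
    ∃ 𝒞 : W → A.Ch, (fun i => A.eps j 1 (𝒞 i)) = w := by
  choose s hs hsw using fun i => exists_isRealizable_apply_eq A.form_ne_zero j (w i)
  choose 𝒞 h𝒞 using fun i => isRealizable_iff_exists_chamber.1 (hs i)
  exact ⟨𝒞, funext fun i => (h𝒞 i j).trans (hsw i)⟩

end Chamber

section Admissible

variable {A} {W : Type*} {m : ℕ}

/-- The voting rules `f j` compute the signs of the chamber `Φ(C₁, …, C_m)` from those of the
chambers `C₁, …, C_m`: this is the relation between `Φ` and `φⱼ⁺`. -/
def Represents (A : Arrangement ℓ ι) (f : ι → (W → ℤˣ) → ℤˣ) (Φ : (W → A.Ch) → A.Ch) : Prop :=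
  ∀ j 𝒞, A.eps j 1 (Φ 𝒞) = f j fun i => A.eps j 1 (𝒞 i)

variable {f g : ι → (W → ℤˣ) → ℤˣ} {Φ Ψ : (W → A.Ch) → A.Ch}

lemma Represents.rule_eq (hf : A.Represents f Φ) (hg : A.Represents g Φ) : f = g := by
  funext j w
  obtain ⟨𝒞, rfl⟩ := A.exists_chambers_eps_eq j w
  rw [← hf, hg]

lemma Represents.map_eq (hΦ : A.Represents f Φ) (hΨ : A.Represents f Ψ) : Φ = Ψ :=
  funext fun 𝒞 => chamber_ext fun j => by rw [hΦ, hΨ]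

lemma Represents.isRealizable (hf : A.Represents f Φ) {v : W → ι → ℤˣ}
    (hv : ∀ i, IsRealizable A.form (v i)) : IsRealizable A.form fun j => f j fun i => v i j := by
  choose 𝒞 h𝒞 using fun i => isRealizable_iff_exists_chamber.1 (hv i)
  exact isRealizable_iff_exists_chamber.2 ⟨Φ 𝒞, fun j => by simp only [hf j 𝒞, h𝒞]⟩

lemma exists_represents (hf : IsAggregator A.form f) : ∃ Φ, A.Represents f Φ := by
  have himage (𝒞 : W → A.Ch) : ∃ D : A.Ch, ∀ j, A.eps j 1 D = f j fun i => A.eps j 1 (𝒞 i) :=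
    isRealizable_iff_exists_chamber.1 <| hf.isRealizable _ fun i =>
      isRealizable_iff_exists_chamber.2 ⟨𝒞 i, fun _ => rfl⟩
  choose Φ hΦ using himage
  exact ⟨Φ, fun j 𝒞 => hΦ 𝒞 j⟩

-- Unanimity of `φⱼ⁺` at the all-minus vector is the condition `φⱼ⁻(+,…,+) = +`.
lemma isAdmissible_iff {Φ : (Fin m → A.Ch) → A.Ch} :
    A.IsAdmissible m Φ ↔ ∃ f, IsAggregator A.form f ∧ A.Represents f Φ := by
  constructor
  · rintro ⟨φ, hφ_one, hφ⟩
    have hrep : A.Represents (fun j => φ j 1) Φ := fun j => hφ j 1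
    refine ⟨_, ⟨fun j σ => ?_, fun v hv => hrep.isRealizable hv⟩, hrep⟩
    obtain ⟨𝒞, h𝒞⟩ := A.exists_chambers_eps_eq j (Function.const (Fin m) σ)
    have hσ : A.eps j σ (Φ 𝒞) = 1 := by
      rw [hφ, ← hφ_one j σ]
      congr 1 with i
      rw [eps_eq_mul, congrFun h𝒞 i, Function.const_apply, Int.units_mul_self]
    rw [← h𝒞, ← hφ, ← mul_left_cancel_iff (a := σ), ← eps_eq_mul, hσ, Int.units_mul_self]
  · rintro ⟨f, hf, hrep⟩
    refine ⟨fun j σ w => σ * f j fun i => σ * w i, fun j σ => ?_, fun j σ 𝒞 => ?_⟩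
    · exact (congrArg (σ * ·) (hf.isUnanimous j (σ * 1))).trans (by simp)
    · simp only [eps_eq_mul A j σ, ← mul_assoc, Int.units_mul_self, one_mul, hrep j 𝒞]

variable (A m) in
lemma card_isAdmissible :
    Nat.card {Φ : (Fin m → A.Ch) → A.Ch // A.IsAdmissible m Φ} =
      Nat.card {f : ι → (Fin m → ℤˣ) → ℤˣ // IsAggregator A.form f} := by
  choose Φ hΦ using fun f : {f : ι → (Fin m → ℤˣ) → ℤˣ // IsAggregator A.form f} =>
    exists_represents f.2
  refine (Nat.card_eq_of_bijective
    (fun f => ⟨Φ f, isAdmissible_iff.2 ⟨f, f.2, hΦ f⟩⟩) ⟨fun f g h => ?_, ?_⟩).symm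
  · have hΦ_eq : Φ f = Φ g := congrArg Subtype.val h
    exact Subtype.ext ((hΦ f).rule_eq (hΦ_eq ▸ hΦ g))
  · rintro ⟨Ψ, hΨ⟩
    obtain ⟨f, hf, hrep⟩ := isAdmissible_iff.1 hΨ
    exact ⟨⟨f, hf⟩, Subtype.ext ((hΦ ⟨f, hf⟩).map_eq hrep)⟩

end Admissible

section Rank

variable {A} {S : Finset ι} {W : Type*}

variable (A) in
lemma rnk_eq_finrank_quotient :
    A.rnk = Module.finrank ℝ ((Fin ℓ → ℝ) ⧸ ⨅ j, LinearMap.ker (A.form j)) := by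
  have h := (⨅ j, LinearMap.ker (A.form j)).finrank_quotient_add_finrank
  rw [Module.finrank_fin_fun] at h
  have hker : ⨅ j ∈ Finset.univ, LinearMap.ker (A.form j) = ⨅ j, LinearMap.ker (A.form j) := by
    simp
  rw [rnk, rnkOn, hker]
  exact (Nat.eq_sub_of_add_eq h).symm

variable (A S) in
lemma rnkOn_eq_rnk_restrict : A.rnkOn S = (A.restrict S).rnk := by
  have hker : ⨅ j ∈ S, LinearMap.ker (A.form j) =
      ⨅ j ∈ Finset.univ, LinearMap.ker ((A.restrict S).form j) := by
    simp only [Finset.mem_univ, iInf_pos, restrict]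
    exact iInf_subtype'
  rw [rnk, rnkOn, rnkOn, hker]

variable (A S) in
lemma rnkOn_eq_finrank_span :
    A.rnkOn S = Module.finrank ℝ (Submodule.span ℝ (A.form '' (S : Set ι))) := by
  have hker : (Submodule.span ℝ (A.form '' S)).dualCoannihilator =
      ⨅ j ∈ S, LinearMap.ker (A.form j) := by
    refine SetLike.ext' ?_
    rw [Submodule.coe_dualCoannihilator_span]
    ext x
    simp
  have h := Subspace.finrank_add_finrank_dualCoannihilator_eq (Submodule.span ℝ (A.form '' S))
  rw [hker, Module.finrank_fin_fun] at h
  exact (Nat.eq_sub_of_add_eq h).symm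

lemma IndecomposableOn.isConnectedFamily (hS : A.IndecomposableOn S) :
    IsConnectedFamily ℝ (A.restrict S).form := by
  intro T hT hT' hdisj
  have hrank {S' : Finset ι} {T : Set S} (h : (S' : Set ι) = Subtype.val '' T) :
      A.rnkOn S' = Module.finrank ℝ (Submodule.span ℝ ((A.restrict S).form '' T)) := by
    rw [rnkOn_eq_finrank_span, h, Set.image_image]
    rfl
  let lift (T : Set S) : Finset ι := (Subtype.val '' T).toFinset
  have coe_lift (T : Set S) : (lift T : Set ι) = Subtype.val '' T := Set.coe_toFinset _
  refine hS ⟨lift T, lift Tᶜ, ?_, ?_, ?_, ?_, ?_⟩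
  · rwa [← Finset.coe_nonempty, coe_lift, Set.image_nonempty]
  · rwa [← Finset.coe_nonempty, coe_lift, Set.image_nonempty]
  · rw [← Finset.disjoint_coe, coe_lift, coe_lift,
      Set.disjoint_image_iff Subtype.coe_injective]
    exact disjoint_compl_right
  · rw [← Finset.coe_inj, Finset.coe_union, coe_lift, coe_lift, ← Set.image_union,
      Set.union_compl_self, Set.image_univ]
    exact Subtype.range_coe
  · rw [hrank (coe_lift T), hrank (coe_lift Tᶜ), ← Submodule.finrank_sup_add_finrank_inf_eq,
      hdisj.eq_bot, finrank_bot, add_zero, ← Submodule.span_union, ← Set.image_union,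
      Set.union_compl_self]
    exact hrank (by simp)

variable (A) in
lemma pairwise_linearIndepOn_form : Pairwise fun j l => LinearIndepOn ℝ A.form {j, l} := by
  intro j l hjl
  refine (linearIndepOn_pair_iff A.form hjl (A.form_ne_zero j)).2 fun c hc => hjl ?_
  have hc_ne : c ≠ 0 := by
    rintro rfl
    exact A.form_ne_zero l (by simpa using hc.symm)
  exact A.ker_injective j l (by rw [← hc, LinearMap.ker_smul _ _ hc_ne])

variable (A W) in
lemma card_isAggregator_eq_prod_restrict {κ : Type*} [Fintype κ] {P : κ → Finset ι}
    (hP : ∀ j, ∃! i, j ∈ P i) (hrnk : A.rnk = ∑ i, A.rnkOn (P i)) :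
    Nat.card {f : ι → (W → ℤˣ) → ℤˣ // IsAggregator A.form f} =
      ∏ i, Nat.card {g : P i → (W → ℤˣ) → ℤˣ // IsAggregator (A.restrict (P i)).form g} := by
  let e : (Σ i, P i) ≃ ι := Set.sigmaEquiv (fun i => (P i : Set ι)) hP
  rw [← card_isAggregator_comp_equiv A.form_ne_zero e]
  refine card_isAggregator_sigma (fun p => A.form_ne_zero (e p)) ?_
  simp only [rnkOn_eq_rnk_restrict, rnk_eq_finrank_quotient] at hrnk
  rw [← e.iInf_comp] at hrnk
  exact hrnk

lemma card_isAggregator_restrict_of_card_eq_one [Finite W] [Nonempty W] (hS : S.card = 1) :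
    Nat.card {g : S → (W → ℤˣ) → ℤˣ // IsAggregator (A.restrict S).form g} =
      2 ^ (2 ^ Nat.card W - 2) := by
  obtain ⟨_⟩ := Fintype.card_eq_one_iff_nonempty_unique.1 ((Fintype.card_coe S).trans hS)
  exact card_isAggregator_of_unique (A.restrict S).form_ne_zero

lemma IndecomposableOn.card_isAggregator_restrict [Finite W] (hS : A.IndecomposableOn S)
    (hcard : 1 < S.card) :
    Nat.card {g : S → (W → ℤˣ) → ℤˣ // IsAggregator (A.restrict S).form g} = Nat.card W :=
  have : Nontrivial S := Fintype.one_lt_card_iff_nontrivial.1 (by rwa [Fintype.card_coe])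
  hS.isConnectedFamily.card_isAggregator (A.restrict S).pairwise_linearIndepOn_form

end Rank

end Arrangement

/-- **Corollary (count of admissible maps).** If `𝒜 = 𝒜₁ ⊎ ⋯ ⊎ 𝒜_a ⊎ ℬ₁ ⊎ ⋯ ⊎ ℬ_b` with all
parts nonempty indecomposable, `|𝒜_p| = 1` and `|ℬ_q| ≥ 3`, then
`|AM(𝒜, m)| = 2^{a(2^m − 2)} · m^b`. -/
theorem card_am {ℓ : ℕ} {ι : Type} [Fintype ι] [Nonempty ι] (A : Arrangement ℓ ι)
    (a b : ℕ) (P : Fin a ⊕ Fin b → Finset ι)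
    (hne : ∀ i, (P i).Nonempty)
    (hdisj : Pairwise fun i k => Disjoint (P i) (P k))
    (hcover : ∀ j : ι, ∃ i, j ∈ P i)
    (hrnk : A.rnk = ∑ i, A.rnkOn (P i))
    (hind : ∀ i, A.IndecomposableOn (P i))
    (hcard1 : ∀ p : Fin a, (P (Sum.inl p)).card = 1)
    (hcard3 : ∀ q : Fin b, 3 ≤ (P (Sum.inr q)).card)
    (m : ℕ) (hm : 0 < m) :
    Nat.card {Φ : (Fin m → A.Ch) → A.Ch // A.IsAdmissible m Φ} =
      2 ^ (a * (2 ^ m - 2)) * m ^ b := by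
  have hpart : ∀ j, ∃! i, j ∈ P i := fun j => (hcover j).imp fun i hi => ⟨hi, fun k hk => by
    by_contra hki
    exact Finset.disjoint_left.1 (hdisj hki) hk hi⟩
  have : Nonempty (Fin m) := ⟨⟨0, hm⟩⟩
  rw [A.card_isAdmissible, A.card_isAggregator_eq_prod_restrict (Fin m) hpart hrnk,
    Fintype.prod_sum_type]
  have hsmall (p : Fin a) := Arrangement.card_isAggregator_restrict_of_card_eq_one (A := A)
    (W := Fin m) (hcard1 p)
  have hlarge (q : Fin b) := (hind (.inr q)).card_isAggregator_restrict (W := Fin m)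
    ((by norm_num : 1 < 3).trans_le (hcard3 q))
  simp only [hsmall, hlarge, Finset.prod_const, Finset.card_univ, Fintype.card_fin,
    Nat.card_eq_fintype_card, ← pow_mul, mul_comm a]
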